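/- Let f(u) = u·(log(1+u))^a with 1 < a < 2. Let V, φ ∈ C¹([−1,1]) be nonnegative even functions with V(0) > 0, φ(0) > 0, φ(1) = 0, with V′ ≤ 0 and φ′ ≤ 0 on [0,1/3], and with 0 ≤ V(x) ≤ V(1/3) and 0 ≤ φ(x) ≤ φ(1/3) for all x ∈ [1/3,1]. Then there exists λ₀ > 0 such that for every λ ≥ λ₀ there is no nonnegative global classical solution u on [0,∞)×[−1,1] of the problem u_t = u_xx + V(x)f(u) on (0,∞)×(−1,1) with u(t,−1) = u(t,1) = 0 for all t > 0 and u(0,x) = λφ(x) for all x ∈ [−1,1]. -/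

import Mathlib

open Set Metric Filter

/-!
Near a point `x₀` where `V` and `φ` are positive, compare `u` with the barrier
`w(t, x) = exp (Y(t)) (d² - (x - x₀)²)²`, where `Y` solves `Y' = κ Y ^ a` and blows up at a time `τ`
because `a > 1`. Since `log (1 + w)` is of order `Y` wherever `w` is not tiny, the reaction
`c w (log (1 + w)) ^ a` beats `∂ₜw = κ Y ^ a w`; where `w` is tiny, `x` is close to the ends of the
interval, and there the bump is convex. So `w` is a subsolution once `Y` is large from the start,
that is, once `τ` is small. If `λ` is large, then `λφ` lies above `w(0, ·)`, and comparison forces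
`u` to blow up at `x₀` no later than at time `τ`.
-/

open Topology

section MaximumPrinciple

lemma deriv_deriv_nonpos_of_isLocalMax {g : ℝ → ℝ} {x : ℝ} (hg : ContinuousAt g x)
    (hmax : IsLocalMax g x) : deriv (deriv g) x ≤ 0 := by
  by_contra! hpos
  have hmin : IsLocalMin g x := isLocalMin_of_deriv_deriv_pos hpos hmax.deriv_eq_zero hg
  have hconst : g =ᶠ[𝓝 x] fun _ => g x := by
    filter_upwards [hmax, hmin] with y hle hge using le_antisymm hle hge
  have hzero := hconst.deriv.deriv_eq
  simp only [deriv_const', deriv_const] at hzero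
  exact hpos.ne' hzero

lemma deriv_nonneg_of_isMaxOn_Icc {h : ℝ → ℝ} {s t : ℝ} (hst : s < t)
    (hmax : IsMaxOn h (Icc s t) t) : 0 ≤ deriv h t := by
  by_cases hd : DifferentiableAt ℝ h t
  · have hcone : s - t ∈ posTangentConeAt (Icc s t) t :=
      sub_mem_posTangentConeAt_of_segment_subset
        (by rw [segment_symm, segment_eq_Icc hst.le])
    have := hmax.localize.hasFDerivWithinAt_nonpos
      hd.hasDerivAt.hasDerivWithinAt.hasFDerivWithinAt hcone
    simp only [ContinuousLinearMap.toSpanSingleton_apply, smul_eq_mul] at this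
    exact nonneg_of_mul_nonpos_right this (sub_neg.2 hst)
  · exact (deriv_zero_of_not_differentiableAt hd).ge

lemma mul_le_deriv_of_isMaxOn_exp_mul {h : ℝ → ℝ} {K s t : ℝ} (hst : s < t)
    (hd : DifferentiableAt ℝ h t)
    (hmax : IsMaxOn (fun r => Real.exp (-K * r) * h r) (Icc s t) t) : K * h t ≤ deriv h t := by
  have hexp : HasDerivAt (fun r => Real.exp (-K * r)) (Real.exp (-K * t) * -K) t := by
    simpa using ((hasDerivAt_id t).const_mul (-K)).exp
  have hnonneg := deriv_nonneg_of_isMaxOn_Icc hst hmax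
  rw [(hexp.fun_mul hd.hasDerivAt).deriv] at hnonneg
  have hfactor : 0 ≤ Real.exp (-K * t) * (deriv h t - K * h t) := by linarith
  linarith [nonneg_of_mul_nonneg_right hfactor (Real.exp_pos _)]

theorem nonpos_of_deriv_le_deriv_deriv_add_mul {z : ℝ → ℝ → ℝ} {T α β L : ℝ}
    (hz : ContinuousOn (fun q : ℝ × ℝ => z q.1 q.2) (Icc 0 T ×ˢ Icc α β))
    (hdiff : ∀ t ∈ Ioc 0 T, ∀ x ∈ Ioo α β, 0 < z t x → DifferentiableAt ℝ (fun s => z s x) t)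
    (hle : ∀ t ∈ Ioc 0 T, ∀ x ∈ Ioo α β, 0 < z t x →
      deriv (fun s => z s x) t ≤ deriv (deriv (z t)) x + L * z t x)
    (hinit : ∀ x ∈ Icc α β, z 0 x ≤ 0) (hleft : ∀ t ∈ Icc 0 T, z t α ≤ 0)
    (hright : ∀ t ∈ Icc 0 T, z t β ≤ 0) :
    ∀ t ∈ Icc 0 T, ∀ x ∈ Icc α β, z t x ≤ 0 := by
  intro t₁ ht₁ x₁ hx₁
  by_contra! hpos₁
  let y : ℝ × ℝ → ℝ := fun q => Real.exp (-(L + 1) * q.1) * z q.1 q.2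
  have hy : ContinuousOn y (Icc 0 T ×ˢ Icc α β) := ContinuousOn.mul (by fun_prop) hz
  obtain ⟨⟨t, x⟩, ⟨ht, hx⟩, hmax⟩ :=
    (isCompact_Icc.prod isCompact_Icc).exists_isMaxOn ⟨(t₁, x₁), ht₁, hx₁⟩ hy
  replace ht : t ∈ Icc 0 T := ht
  replace hx : x ∈ Icc α β := hx
  replace hmax : ∀ s ∈ Icc 0 T, ∀ r ∈ Icc α β, y (s, r) ≤ y (t, x) :=
    fun s hs r hr => hmax (mk_mem_prod hs hr)
  have hpos : 0 < z t x :=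
    pos_of_mul_pos_right ((mul_pos (Real.exp_pos _) hpos₁).trans_le (hmax t₁ ht₁ x₁ hx₁))
      (Real.exp_pos _).le
  have ht0 : 0 < t := ht.1.lt_of_ne (by rintro rfl; exact (hinit x hx).not_gt hpos)
  have hxα : α < x := hx.1.lt_of_ne (by rintro rfl; exact (hleft t ht).not_gt hpos)
  have hxβ : x < β := hx.2.lt_of_ne (by rintro rfl; exact (hright t ht).not_gt hpos)
  have htime : (L + 1) * z t x ≤ deriv (fun s => z s x) t :=
    mul_le_deriv_of_isMaxOn_exp_mul ht0 (hdiff t ⟨ht0, ht.2⟩ x ⟨hxα, hxβ⟩ hpos)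
      fun s hs => hmax s ⟨hs.1, hs.2.trans ht.2⟩ x hx
  have hlocal : IsLocalMax (z t) x := by
    filter_upwards [Icc_mem_nhds hxα hxβ] with r hr
    exact le_of_mul_le_mul_left (hmax t ht r hr) (Real.exp_pos _)
  have hcont : ContinuousAt (z t) x :=
    (hz.comp (f := fun r => (t, r)) (by fun_prop) fun r hr => ⟨ht, hr⟩).continuousAt
      (Icc_mem_nhds hxα hxβ)
  have hspace : deriv (deriv (z t)) x ≤ 0 := deriv_deriv_nonpos_of_isLocalMax hcont hlocal
  linarith [hle t ⟨ht0, ht.2⟩ x ⟨hxα, hxβ⟩ hpos]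

end MaximumPrinciple

section Comparison

/-- The regularity of a classical solution: `u` is continuous on `[0, T) × [α, β]`, and
differentiable in time and `C²` in space on `(0, T) × (α, β)`. -/
structure IsClassicalOn (T α β : ℝ) (u : ℝ → ℝ → ℝ) : Prop where
  continuousOn : ContinuousOn (fun q : ℝ × ℝ => u q.1 q.2) (Ico 0 T ×ˢ Icc α β)
  differentiableAt : ∀ t ∈ Ioo 0 T, ∀ x ∈ Ioo α β, DifferentiableAt ℝ (fun s => u s x) t
  contDiffAt : ∀ t ∈ Ioo 0 T, ∀ x ∈ Ioo α β, ContDiffAt ℝ 2 (u t) x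

/-- A classical supersolution of `u_t = u_xx + F(x, u)` on `[0, T) × [α, β]`. No boundary or initial
condition is included. -/
structure IsSupersolution (F : ℝ → ℝ → ℝ) (T α β : ℝ) (u : ℝ → ℝ → ℝ) : Prop
    extends IsClassicalOn T α β u where
  le_deriv : ∀ t ∈ Ioo 0 T, ∀ x ∈ Ioo α β,
    deriv (deriv (u t)) x + F x (u t x) ≤ deriv (fun s => u s x) t

/-- A classical subsolution of `u_t = u_xx + F(x, u)` on `[0, T) × [α, β]`. No boundary or initial
condition is included. -/
structure IsSubsolution (F : ℝ → ℝ → ℝ) (T α β : ℝ) (u : ℝ → ℝ → ℝ) : Prop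
    extends IsClassicalOn T α β u where
  deriv_le : ∀ t ∈ Ioo 0 T, ∀ x ∈ Ioo α β,
    deriv (fun s => u s x) t ≤ deriv (deriv (u t)) x + F x (u t x)

variable {F G : ℝ → ℝ → ℝ} {T T' α α' β β' : ℝ} {u w : ℝ → ℝ → ℝ}

lemma IsSupersolution.mono (hu : IsSupersolution F T α β u) (hT : T' ≤ T) (hα : α ≤ α')
    (hβ : β' ≤ β) (hG : ∀ t ∈ Ioo 0 T', ∀ x ∈ Ioo α' β', G x (u t x) ≤ F x (u t x)) :
    IsSupersolution G T' α' β' u := by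
  have ht : Ioo 0 T' ⊆ Ioo 0 T := Ioo_subset_Ioo_right hT
  have hx : Ioo α' β' ⊆ Ioo α β := Ioo_subset_Ioo hα hβ
  exact
    { continuousOn := hu.continuousOn.mono
        (prod_mono (Ico_subset_Ico_right hT) (Icc_subset_Icc hα hβ))
      differentiableAt := fun t h x h' => hu.differentiableAt t (ht h) x (hx h')
      contDiffAt := fun t h x h' => hu.contDiffAt t (ht h) x (hx h')
      le_deriv := fun t h x h' =>
        (add_le_add_right (hG t h x h') _).trans (hu.le_deriv t (ht h) x (hx h')) }

lemma deriv_deriv_sub {f g : ℝ → ℝ} {x : ℝ} (hf : ContDiffAt ℝ 2 f x) (hg : ContDiffAt ℝ 2 g x) :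
    deriv (deriv fun y => f y - g y) x = deriv (deriv f) x - deriv (deriv g) x := by
  simpa only [iteratedDeriv_succ, iteratedDeriv_zero] using iteratedDeriv_fun_sub hf hg

theorem IsSubsolution.le_of_isSupersolution {f : ℝ → ℝ} {m : ℝ}
    (hw : IsSubsolution (fun _ => f) T α β w) (hu : IsSupersolution (fun _ => f) T α β u)
    (hf : LocallyLipschitzOn (Ici m) f) (hm : ∀ t ∈ Ico 0 T, ∀ x ∈ Icc α β, m ≤ u t x)
    (hinit : ∀ x ∈ Icc α β, w 0 x ≤ u 0 x) (hleft : ∀ t ∈ Ico 0 T, w t α ≤ u t α)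
    (hright : ∀ t ∈ Ico 0 T, w t β ≤ u t β) :
    ∀ t ∈ Ico 0 T, ∀ x ∈ Icc α β, w t x ≤ u t x := by
  intro t₁ ht₁ x₁ hx₁
  have hsub : Icc 0 t₁ ⊆ Ico 0 T := Icc_subset_Ico_right ht₁.2
  have hioo : Ioc 0 t₁ ⊆ Ioo 0 T := Ioc_subset_Ioo_right ht₁.2
  have hwc := hw.continuousOn.mono (prod_mono_left (t := Icc α β) hsub)
  have huc := hu.continuousOn.mono (prod_mono_left (t := Icc α β) hsub)
  obtain ⟨W, hW⟩ := (isCompact_Icc.prod isCompact_Icc).bddAbove_image hwc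
  replace hW : ∀ t ∈ Icc 0 t₁, ∀ x ∈ Icc α β, w t x ≤ W :=
    fun t ht x hx => hW ⟨(t, x), ⟨ht, hx⟩, rfl⟩
  obtain ⟨L, hL⟩ := (hf.mono Icc_subset_Ici_self).exists_lipschitzOnWith_of_compact
    (isCompact_Icc (a := m) (b := W))
  refine sub_nonpos.1 (nonpos_of_deriv_le_deriv_deriv_add_mul (z := fun t x => w t x - u t x)
    (L := L) (hwc.sub huc)
    (fun t ht x hx _ => (hw.differentiableAt t (hioo ht) x hx).sub
      (hu.differentiableAt t (hioo ht) x hx))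
    (fun t ht x hx hpos => ?_) (fun x hx => sub_nonpos.2 (hinit x hx))
    (fun t ht => sub_nonpos.2 (hleft t (hsub ht))) (fun t ht => sub_nonpos.2 (hright t (hsub ht)))
    t₁ ⟨ht₁.1, le_rfl⟩ x₁ hx₁)
  have htc : t ∈ Icc 0 t₁ := Ioc_subset_Icc_self ht
  have hxc : x ∈ Icc α β := Ioo_subset_Icc_self hx
  rw [deriv_deriv_sub (hw.contDiffAt t (hioo ht) x hx) (hu.contDiffAt t (hioo ht) x hx),
    deriv_fun_sub (hw.differentiableAt t (hioo ht) x hx) (hu.differentiableAt t (hioo ht) x hx)]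
  have huw : u t x < w t x := sub_pos.1 hpos
  have hmu : m ≤ u t x := hm t (hsub htc) x hxc
  have hwW : w t x ≤ W := hW t htc x hxc
  have hlip : f (w t x) - f (u t x) ≤ L * (w t x - u t x) := by
    have := hL.dist_le_mul _ ⟨hmu.trans huw.le, hwW⟩ _ ⟨hmu, huw.le.trans hwW⟩
    rw [Real.dist_eq, Real.dist_eq, abs_of_pos hpos] at this
    exact (le_abs_self _).trans this
  linarith [hw.deriv_le t (hioo ht) x hx, hu.le_deriv t (hioo ht) x hx]

end Comparison

section Barrier

/-- The nonlinearity `f(s) = s (log (1 + s)) ^ a`. -/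
noncomputable def logReaction (a s : ℝ) : ℝ := s * Real.log (1 + s) ^ a

/-- The positive solution of `Y' = κ Y ^ a` with finite-time blow-up (`a > 1`, `κ > 0`), as a
function of the time `r > 0` left until the blow-up. -/
noncomputable def blowupProfile (a κ r : ℝ) : ℝ := (κ * (a - 1) * r) ^ (-(a - 1)⁻¹)

/-- The bump `(d² - x²)²` on `[-d, d]`; it and its first derivative vanish at `±d`. -/
def bump (d x : ℝ) : ℝ := (d ^ 2 - x ^ 2) ^ 2

/-- The subsolution `exp (Y(τ - t)) (d² - (x - x₀)²)²`, with `Y = blowupProfile a κ`, that blows up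
at time `τ` in `(x₀ - d, x₀ + d)`. -/
noncomputable def barrier (a κ τ d x₀ t x : ℝ) : ℝ :=
  Real.exp (blowupProfile a κ (τ - t)) * bump d (x - x₀)

variable {a c d κ r r' s t τ x₀ : ℝ}

lemma logReaction_nonneg (hs : 0 ≤ s) : 0 ≤ logReaction a s :=
  mul_nonneg hs (Real.rpow_nonneg (Real.log_nonneg (by linarith)) a)

lemma contDiffOn_logReaction (ha : 1 ≤ a) : ContDiffOn ℝ 1 (logReaction a) (Ici 0) := by
  refine contDiffOn_id.mul ((Real.contDiff_rpow_const_of_le (n := 1)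
    (by exact_mod_cast ha)).comp_contDiffOn (ContDiffOn.log (by fun_prop) fun s hs => ?_))
  have : 0 ≤ s := hs
  positivity

lemma hasDerivAt_blowupProfile (ha : 1 < a) (hκ : 0 < κ) (hr : 0 < r) :
    HasDerivAt (blowupProfile a κ) (-(κ * blowupProfile a κ r ^ a)) r := by
  have ha' : 0 < a - 1 := sub_pos.2 ha
  have hbase : 0 < κ * (a - 1) * r := by positivity
  refine (((hasDerivAt_id r).const_mul (κ * (a - 1))).rpow_const
    (Or.inl hbase.ne')).congr_deriv ?_
  have hexponent : -(a - 1)⁻¹ * a = -(a - 1)⁻¹ - 1 := by field_simp; ring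
  simp only [blowupProfile, id]
  rw [← Real.rpow_mul hbase.le, hexponent]
  field_simp

lemma blowupProfile_le_blowupProfile (ha : 1 < a) (hκ : 0 < κ) (hr : 0 < r) (hrr' : r ≤ r') :
    blowupProfile a κ r' ≤ blowupProfile a κ r := by
  have hrate : 0 < κ * (a - 1) := mul_pos hκ (sub_pos.2 ha)
  exact Real.rpow_le_rpow_of_nonpos (mul_pos hrate hr) (mul_le_mul_of_nonneg_left hrr' hrate.le)
    (by simp [ha.le])

lemma tendsto_blowupProfile (ha : 1 < a) (hκ : 0 < κ) :
    Tendsto (blowupProfile a κ) (𝓝[>] 0) atTop := by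
  refine (tendsto_rpow_neg_nhdsGT_zero (by simpa using ha)).comp (tendsto_nhdsWithin_iff.2 ⟨?_, ?_⟩)
  · refine Tendsto.mono_left ?_ nhdsWithin_le_nhds
    simpa using (continuous_const_mul (κ * (a - 1))).tendsto 0
  · filter_upwards [self_mem_nhdsWithin] with r (hr : 0 < r)
    exact mul_pos (mul_pos hκ (sub_pos.2 ha)) hr

lemma contDiff_bump : ContDiff ℝ 2 (bump d) := by
  unfold bump
  fun_prop

lemma deriv_deriv_bump (x : ℝ) : deriv (deriv (bump d)) x = 12 * x ^ 2 - 4 * d ^ 2 := by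
  have hfirst : ∀ y, HasDerivAt (bump d) (4 * y ^ 3 - 4 * d ^ 2 * y) y := fun y =>
    ((((hasDerivAt_id y).pow 2).const_sub (d ^ 2)).pow 2).congr_deriv (by simp; ring)
  have hsecond : HasDerivAt (fun y => 4 * y ^ 3 - 4 * d ^ 2 * y) (12 * x ^ 2 - 4 * d ^ 2) x :=
    ((((hasDerivAt_id x).pow 3).const_mul 4).sub
      ((hasDerivAt_id x).const_mul (4 * d ^ 2))).congr_deriv (by simp; ring)
  rw [funext fun y => (hfirst y).deriv, hsecond.deriv]

lemma bump_nonneg (x : ℝ) : 0 ≤ bump d x := sq_nonneg _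

lemma bump_le {x : ℝ} (hx : |x| ≤ d) : bump d x ≤ d ^ 4 := by
  have hsq : x ^ 2 ≤ d ^ 2 := sq_le_sq' (abs_le.1 hx).1 (abs_le.1 hx).2
  calc bump d x ≤ (d ^ 2) ^ 2 := pow_le_pow_left₀ (by linarith) (by linarith [sq_nonneg x]) 2
    _ = d ^ 4 := by ring

lemma mul_pow_four_le_bump {θ x : ℝ} (hθ : θ ≤ 1) (hx : x ^ 2 ≤ θ * d ^ 2) :
    (1 - θ) ^ 2 * d ^ 4 ≤ bump d x :=
  calc (1 - θ) ^ 2 * d ^ 4 = ((1 - θ) * d ^ 2) ^ 2 := by ring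
    _ ≤ (d ^ 2 - x ^ 2) ^ 2 :=
      pow_le_pow_left₀ (mul_nonneg (by linarith) (sq_nonneg d)) (by linarith) 2

lemma half_le_log_one_add_exp_mul {Y p : ℝ} (hp : 1 ≤ Real.exp (Y / 2) * p) :
    Y / 2 ≤ Real.log (1 + Real.exp Y * p) := by
  have hexp : Real.exp Y = Real.exp (Y / 2) * Real.exp (Y / 2) := by
    rw [← Real.exp_add, add_halves]
  have hle : Real.exp (Y / 2) ≤ 1 + Real.exp Y * p := by
    rw [hexp, mul_assoc]
    linarith [le_mul_of_one_le_right (Real.exp_pos (Y / 2)).le hp]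
  exact (Real.le_log_iff_exp_le ((Real.exp_pos _).trans_le hle)).2 hle

lemma two_mul_mul_rpow_mul_le_mul_log_rpow {Y p : ℝ} (ha : 0 ≤ a) (hc : 0 ≤ c) (hY : 0 ≤ Y)
    (hp0 : 0 ≤ p) (hp : 1 ≤ Real.exp (Y / 2) * p) :
    2 * (c / 2 ^ (a + 1) * Y ^ a * p) ≤ c * p * Real.log (1 + Real.exp Y * p) ^ a :=
  calc 2 * (c / 2 ^ (a + 1) * Y ^ a * p) = c * p * (Y / 2) ^ a := by
        rw [Real.div_rpow hY two_pos.le, Real.rpow_add_one two_ne_zero]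
        field_simp
    _ ≤ c * p * Real.log (1 + Real.exp Y * p) ^ a := by
        gcongr
        exact half_le_log_one_add_exp_mul hp

-- Where the bump is not tiny, half of the reaction compensates its concavity near `0` and the other
-- half gives the growth rate `c / 2 ^ (a + 1)`; where it is tiny, `x ^ 2 > 2 / 3 * d ^ 2` and the
-- bump is convex.
lemma mul_rpow_mul_bump_le {Y x : ℝ} (ha : 0 ≤ a) (hc : 0 ≤ c) (hd : 0 < d) (hY : 0 ≤ Y)
    (hYa : 9 / d ^ 2 ≤ c / 2 ^ (a + 1) * Y ^ a) (hexp : 9 / d ^ 4 ≤ Real.exp (Y / 2))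
    (hYexp : c / 2 ^ (a + 1) * Y ^ a ≤ 4 * d ^ 2 * Real.exp (Y / 2)) :
    c / 2 ^ (a + 1) * Y ^ a * bump d x ≤ deriv (deriv (bump d)) x +
      c * bump d x * Real.log (1 + Real.exp Y * bump d x) ^ a := by
  rw [deriv_deriv_bump]
  set q := c / 2 ^ (a + 1) * Y ^ a
  set p := bump d x
  have hp : 0 ≤ p := bump_nonneg x
  rcases le_or_gt 1 (Real.exp (Y / 2) * p) with hlarge | hsmall
  · have hreaction : 2 * (q * p) ≤ c * p * Real.log (1 + Real.exp Y * p) ^ a :=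
      two_mul_mul_rpow_mul_le_mul_log_rpow ha hc hY hp hlarge
    have hcenter : 4 * d ^ 2 - 12 * x ^ 2 ≤ q * p := by
      rcases le_total (x ^ 2) (1 / 3 * d ^ 2) with hx | hx
      · calc 4 * d ^ 2 - 12 * x ^ 2 ≤ 9 / d ^ 2 * ((1 - 1 / 3) ^ 2 * d ^ 4) := by
              field_simp
              linarith [sq_nonneg x]
          _ ≤ q * p := by gcongr; exact mul_pow_four_le_bump (by norm_num) hx
      · have : 0 ≤ q * p := mul_nonneg (le_trans (by positivity) hYa) hp
        linarith
    linarith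
  · have hx : 2 / 3 * d ^ 2 < x ^ 2 := by
      by_contra! hx
      refine hsmall.not_ge ?_
      calc (1 : ℝ) = 9 / d ^ 4 * ((1 - 2 / 3) ^ 2 * d ^ 4) := by field_simp; norm_num
        _ ≤ Real.exp (Y / 2) * p := by gcongr; exact mul_pow_four_le_bump (by norm_num) hx
    have hq4 : q * p ≤ 4 * d ^ 2 :=
      calc q * p ≤ 4 * d ^ 2 * Real.exp (Y / 2) * p := by gcongr
        _ = 4 * d ^ 2 * (Real.exp (Y / 2) * p) := mul_assoc _ _ _
        _ ≤ 4 * d ^ 2 := mul_le_of_le_one_right (by positivity) hsmall.le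
    have hlog : 0 ≤ Real.log (1 + Real.exp Y * p) :=
      Real.log_nonneg (le_add_of_nonneg_right (by positivity))
    have hreaction : 0 ≤ c * p * Real.log (1 + Real.exp Y * p) ^ a := by positivity
    linarith

lemma eventually_mul_rpow_mul_bump_le (ha : 0 < a) (hc : 0 < c) (hd : 0 < d) :
    ∀ᶠ Y : ℝ in atTop, ∀ x, c / 2 ^ (a + 1) * Y ^ a * bump d x ≤ deriv (deriv (bump d)) x +
      c * bump d x * Real.log (1 + Real.exp Y * bump d x) ^ a := by
  have hκ : 0 < c / 2 ^ (a + 1) := by positivity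
  have hlittle : (fun Y : ℝ => c / 2 ^ (a + 1) * Y ^ a) =o[atTop] fun Y => Real.exp (1 / 2 * Y) :=
    (isLittleO_rpow_exp_pos_mul_atTop a one_half_pos).const_mul_left _
  filter_upwards [eventually_ge_atTop 0,
    ((tendsto_rpow_atTop ha).const_mul_atTop hκ).eventually_ge_atTop (9 / d ^ 2),
    (Real.tendsto_exp_atTop.comp (tendsto_id.atTop_div_const two_pos)).eventually_ge_atTop
      (9 / d ^ 4),
    hlittle.bound (c := 4 * d ^ 2) (by positivity)] with Y hY hYa hexp hYexp x
  rw [Real.norm_of_nonneg (by positivity), Real.norm_of_nonneg (Real.exp_pos _).le,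
    one_div_mul_eq_div] at hYexp
  exact mul_rpow_mul_bump_le ha.le hc.le hd hY hYa hexp hYexp

lemma barrier_zero_le {x : ℝ} (hx : x ∈ Icc (x₀ - d) (x₀ + d)) :
    barrier a κ τ d x₀ 0 x ≤ Real.exp (blowupProfile a κ τ) * d ^ 4 := by
  rw [barrier, sub_zero]
  gcongr
  exact bump_le (abs_le.2 ⟨by linarith [hx.1], by linarith [hx.2]⟩)

lemma barrier_sub_eq_zero : barrier a κ τ d x₀ t (x₀ - d) = 0 := by
  simp [barrier, bump]

lemma barrier_add_eq_zero : barrier a κ τ d x₀ t (x₀ + d) = 0 := by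
  simp [barrier, bump]

lemma tendsto_barrier_self (ha : 1 < a) (hκ : 0 < κ) (hd : 0 < d) :
    Tendsto (fun t => barrier a κ τ d x₀ t x₀) (𝓝[<] τ) atTop := by
  have hremaining : Tendsto (fun t => τ - t) (𝓝[<] τ) (𝓝[>] 0) := by
    refine tendsto_nhdsWithin_iff.2 ⟨Tendsto.mono_left ?_ nhdsWithin_le_nhds, ?_⟩
    · simpa using (continuous_sub_left τ).tendsto τ
    · filter_upwards [self_mem_nhdsWithin] with t (ht : t < τ) using sub_pos.2 ht
  have hcenter : 0 < bump d (x₀ - x₀) := by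
    rw [sub_self, bump, zero_pow two_ne_zero, sub_zero]
    positivity
  exact (Real.tendsto_exp_atTop.comp
    ((tendsto_blowupProfile ha hκ).comp hremaining)).atTop_mul_const hcenter

lemma hasDerivAt_barrier (ha : 1 < a) (hκ : 0 < κ) (ht : t < τ) (x : ℝ) :
    HasDerivAt (fun s => barrier a κ τ d x₀ s x)
      (Real.exp (blowupProfile a κ (τ - t)) *
        (κ * blowupProfile a κ (τ - t) ^ a * bump d (x - x₀))) t := by
  have hprofile := ((hasDerivAt_blowupProfile ha hκ (sub_pos.2 ht)).comp t
    ((hasDerivAt_id t).const_sub τ)).exp.mul_const (bump d (x - x₀))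
  exact hprofile.congr_deriv (by simp only [Function.comp]; ring)

lemma deriv_deriv_barrier (x : ℝ) :
    deriv (deriv (barrier a κ τ d x₀ t)) x =
      Real.exp (blowupProfile a κ (τ - t)) * deriv (deriv (bump d)) (x - x₀) := by
  unfold barrier
  simp only [deriv_const_mul_field', deriv_comp_sub_const]

lemma isClassicalOn_barrier (ha : 1 < a) (hκ : 0 < κ) {α β : ℝ} :
    IsClassicalOn τ α β (barrier a κ τ d x₀) where
  continuousOn := by
    have hprofile : ContinuousOn (fun q : ℝ × ℝ => blowupProfile a κ (τ - q.1))
        (Ico 0 τ ×ˢ Icc α β) := fun q hq =>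
      ((hasDerivAt_blowupProfile ha hκ (sub_pos.2 hq.1.2)).continuousAt.comp
        (f := fun q : ℝ × ℝ => τ - q.1) (by fun_prop)).continuousWithinAt
    exact hprofile.rexp.mul (contDiff_bump.continuous.comp (by fun_prop)).continuousOn
  differentiableAt t ht x _ := (hasDerivAt_barrier ha hκ ht.2 x).differentiableAt
  contDiffAt t _ x _ :=
    (contDiff_const.mul (contDiff_bump.comp (contDiff_id.sub contDiff_const))).contDiffAt

lemma eventually_isSubsolution_barrier (ha : 1 < a) (hc : 0 < c) (hd : 0 < d) {α β : ℝ} :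
    ∀ᶠ τ in 𝓝[>] 0, IsSubsolution (fun _ s => c * logReaction a s) τ α β
      (barrier a (c / 2 ^ (a + 1)) τ d x₀) := by
  have hκ : 0 < c / 2 ^ (a + 1) := by positivity
  filter_upwards [(tendsto_blowupProfile ha hκ).eventually (eventually_forall_ge_atTop.2
    (eventually_mul_rpow_mul_bump_le (zero_lt_one.trans ha) hc hd))] with τ hτ
  refine ⟨isClassicalOn_barrier ha hκ, fun t ht x _ => ?_⟩
  have hprofile := blowupProfile_le_blowupProfile ha hκ (sub_pos.2 ht.2) (sub_le_self τ ht.1.le)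
  rw [(hasDerivAt_barrier ha hκ ht.2 x).deriv, deriv_deriv_barrier]
  refine (mul_le_mul_of_nonneg_left (hτ _ hprofile (x - x₀)) (Real.exp_pos _).le).trans_eq ?_
  simp only [logReaction, barrier]
  ring

end Barrier

section BlowUp

variable {a c d x₀ T α β : ℝ} {u : ℝ → ℝ → ℝ} {V φ : ℝ → ℝ}

lemma IsClassicalOn.bddAbove_image_Icc {τ x : ℝ} (hu : IsClassicalOn T α β u) (hτ : τ < T)
    (hx : x ∈ Icc α β) : BddAbove ((fun t => u t x) '' Icc 0 τ) :=
  isCompact_Icc.bddAbove_image <| hu.continuousOn.comp (f := fun t => (t, x)) (by fun_prop)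
    fun _ ht => ⟨⟨ht.1, ht.2.trans_lt hτ⟩, hx⟩

theorem exists_forall_not_isSupersolution_logReaction (ha : 1 < a) (hc : 0 < c) (hd : 0 < d)
    (x₀ : ℝ) (hT : 0 < T) :
    ∃ Λ > 0, ∀ u, IsSupersolution (fun _ s => c * logReaction a s) T (x₀ - d) (x₀ + d) u →
      (∀ t ∈ Ico 0 T, ∀ x ∈ Icc (x₀ - d) (x₀ + d), 0 ≤ u t x) →
      ¬ ∀ x ∈ Icc (x₀ - d) (x₀ + d), Λ ≤ u 0 x := by
  have hκ : 0 < c / 2 ^ (a + 1) := by positivity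
  obtain ⟨τ, hsub, hτ0, hτT⟩ := ((eventually_isSubsolution_barrier (x₀ := x₀) (α := x₀ - d)
    (β := x₀ + d) ha hc hd).and (Ioo_mem_nhdsGT hT)).exists
  refine ⟨Real.exp (blowupProfile a (c / 2 ^ (a + 1)) τ) * d ^ 4, by positivity,
    fun u hu hnonneg hinit => ?_⟩
  have hx₀ : x₀ ∈ Icc (x₀ - d) (x₀ + d) := ⟨by linarith, by linarith⟩
  have hlip : LocallyLipschitzOn (Ici 0) fun s => c * logReaction a s :=
    (contDiffOn_const.mul (contDiffOn_logReaction ha.le)).locallyLipschitzOn (convex_Ici 0)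
  have hnonneg' : ∀ t ∈ Ico 0 τ, ∀ x ∈ Icc (x₀ - d) (x₀ + d), 0 ≤ u t x :=
    fun t ht => hnonneg t ⟨ht.1, ht.2.trans hτT⟩
  have hcomparison := hsub.le_of_isSupersolution
    (hu.mono hτT.le le_rfl le_rfl fun _ _ _ _ => le_rfl) hlip hnonneg'
    (fun x hx => (barrier_zero_le hx).trans (hinit x hx))
    (fun t ht => barrier_sub_eq_zero.trans_le (hnonneg' t ht _ ⟨le_rfl, hx₀.1.trans hx₀.2⟩))
    (fun t ht => barrier_add_eq_zero.trans_le (hnonneg' t ht _ ⟨hx₀.1.trans hx₀.2, le_rfl⟩))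
  obtain ⟨B, hB⟩ := hu.bddAbove_image_Icc hτT hx₀
  obtain ⟨t, hlarge, ht⟩ := (((tendsto_barrier_self (x₀ := x₀) ha hκ hd).eventually_gt_atTop B).and
    (Ioo_mem_nhdsLT hτ0)).exists
  exact hlarge.not_ge ((hcomparison t ⟨ht.1.le, ht.2⟩ x₀ hx₀).trans
    (hB ⟨t, Ioo_subset_Icc_self ht, rfl⟩))

lemma exists_Icc_subset_forall_half_le (hx₀ : x₀ ∈ Ioo α β) (hV : ContinuousAt V x₀)
    (hV0 : 0 < V x₀) (hφ : ContinuousAt φ x₀) (hφ0 : 0 < φ x₀) :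
    ∃ d > 0, Icc (x₀ - d) (x₀ + d) ⊆ Icc α β ∧
      ∀ x ∈ Icc (x₀ - d) (x₀ + d), V x₀ / 2 ≤ V x ∧ φ x₀ / 2 ≤ φ x := by
  obtain ⟨d, hd, h⟩ := nhds_basis_closedBall.eventually_iff.1 <|
    (eventually_mem_set.2 (Icc_mem_nhds hx₀.1 hx₀.2)).and <|
    (hV.eventually_const_le (half_lt_self hV0)).and (hφ.eventually_const_le (half_lt_self hφ0))
  rw [Real.closedBall_eq_Icc] at h
  exact ⟨d, hd, fun x hx => (h hx).1, fun x hx => (h hx).2⟩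

theorem stmt15_general (ha : 1 < a) (hT : 0 < T) (hx₀ : x₀ ∈ Ioo α β)
    (hV : ContinuousAt V x₀) (hV0 : 0 < V x₀) (hφ : ContinuousAt φ x₀) (hφ0 : 0 < φ x₀) :
    ∃ lam₀ > 0, ∀ lam ≥ lam₀,
      ¬ ∃ u, IsSupersolution (fun x s => V x * logReaction a s) T α β u ∧
        (∀ x ∈ Icc α β, lam * φ x ≤ u 0 x) ∧ ∀ t ∈ Ico 0 T, ∀ x ∈ Icc α β, 0 ≤ u t x := by
  obtain ⟨d, hd, hsub, hlower⟩ := exists_Icc_subset_forall_half_le hx₀ hV hV0 hφ hφ0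
  obtain ⟨Λ, hΛ, hblowup⟩ :=
    exists_forall_not_isSupersolution_logReaction ha (half_pos hV0) hd x₀ hT
  refine ⟨Λ / (φ x₀ / 2), by positivity, fun lam hlam ⟨u, hu, hinit, hnonneg⟩ => ?_⟩
  have hlam0 : 0 ≤ lam := le_trans (by positivity) hlam
  obtain ⟨hα, hβ⟩ := (Icc_subset_Icc_iff (by linarith)).1 hsub
  refine hblowup u (hu.mono le_rfl hα hβ fun t ht x hx => ?_)
    (fun t ht x hx => hnonneg t ht x (hsub hx)) fun x hx => ?_
  · have hx' := Ioo_subset_Icc_self hx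
    exact mul_le_mul_of_nonneg_right (hlower x hx').1
      (logReaction_nonneg (hnonneg t (Ioo_subset_Ico_self ht) x (hsub hx')))
  · calc Λ ≤ lam * (φ x₀ / 2) := (div_le_iff₀ (half_pos hφ0)).1 hlam
      _ ≤ lam * φ x := mul_le_mul_of_nonneg_left (hlower x hx).2 hlam0
      _ ≤ u 0 x := hinit x (hsub hx)

end BlowUp

theorem stmt15
    (a : ℝ) (ha1 : 1 < a) (ha2 : a < 2)
    (V φ : ℝ → ℝ)
    (hV_C1 : ContDiffOn ℝ 1 V (Icc (-1) 1)) (hφ_C1 : ContDiffOn ℝ 1 φ (Icc (-1) 1))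
    (hV_nonneg : ∀ x ∈ Icc (-1:ℝ) 1, 0 ≤ V x) (hφ_nonneg : ∀ x ∈ Icc (-1:ℝ) 1, 0 ≤ φ x)
    (hV_even : ∀ x ∈ Icc (-1:ℝ) 1, V (-x) = V x) (hφ_even : ∀ x ∈ Icc (-1:ℝ) 1, φ (-x) = φ x)
    (hV0 : 0 < V 0) (hφ0 : 0 < φ 0) (hφ1 : φ 1 = 0)
    (hV' : ∀ x ∈ Icc (0:ℝ) (1/3), derivWithin V (Icc (-1) 1) x ≤ 0)
    (hφ' : ∀ x ∈ Icc (0:ℝ) (1/3), derivWithin φ (Icc (-1) 1) x ≤ 0)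
    (hVbd : ∀ x ∈ Icc (1/3:ℝ) 1, V x ≤ V (1/3))
    (hφbd : ∀ x ∈ Icc (1/3:ℝ) 1, φ x ≤ φ (1/3))
    :
    ∃ lam₀ > 0, ∀ lam ≥ lam₀,
      ¬ ∃ u : ℝ → ℝ → ℝ,
        ContinuousOn (fun q : ℝ × ℝ => u q.1 q.2) (Ici 0 ×ˢ Icc (-1) 1) ∧
        (∀ t > (0:ℝ), ∀ x ∈ Ioo (-1:ℝ) 1,
          DifferentiableAt ℝ (fun s => u s x) t ∧ ContDiffAt ℝ 2 (u t) x ∧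
          deriv (fun s => u s x) t = deriv (deriv (u t)) x + V x * (u t x * Real.log (1 + u t x) ^ a)) ∧
        (∀ t > (0:ℝ), u t (-1) = 0 ∧ u t 1 = 0) ∧
        (∀ x ∈ Icc (-1:ℝ) 1, u 0 x = lam * φ x) ∧
        (∀ t ≥ (0:ℝ), ∀ x ∈ Icc (-1:ℝ) 1, 0 ≤ u t x) := by
  have hmem : Icc (-1 : ℝ) 1 ∈ 𝓝 0 := Icc_mem_nhds (by norm_num) (by norm_num)
  obtain ⟨lam₀, hlam₀, h⟩ := stmt15_general ha1 one_pos (α := -1) (β := 1) (by norm_num)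
    (hV_C1.continuousOn.continuousAt hmem) hV0 (hφ_C1.continuousOn.continuousAt hmem) hφ0
  refine ⟨lam₀, hlam₀, fun lam hlam ⟨u, huc, heq, _, hinit, hnonneg⟩ => h lam hlam ⟨u, ?_,
    fun x hx => (hinit x hx).ge, fun t ht => hnonneg t ht.1⟩⟩
  exact
    { continuousOn := huc.mono (prod_mono_left Ico_subset_Ici_self)
      differentiableAt := fun t ht x hx => (heq t ht.1 x hx).1
      contDiffAt := fun t ht x hx => (heq t ht.1 x hx).2.1
      le_deriv := fun t ht x hx => (heq t ht.1 x hx).2.2.ge }
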